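/- If A is a set of natural numbers with positive upper density, then for every k, A contains an arithmetic progression of length k (Szemerédi's theorem). -/

import Mathlib

/-!
Szemerédi's theorem is deduced from the density Hales-Jewett theorem: for every finite alphabet `α`
and `δ > 0` there is an index set `ι` such that each set of words `ι → α` of density at least `δ`
contains a combinatorial line. A random translate of the map sending a word over `{0, …, k}` to the
sum of its letters pulls a dense set of integers back to a dense set of words, and maps lines to
arithmetic progressions (`exists_ap_of_dense`).

The density Hales-Jewett theorem is proved by induction on the alphabet, passing from `α` to
`Option α` (`dhj_option`), in the spirit of Dodos, Kanellopoulos and Tyros. A word over `Option α`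
with a letter `none` is at the same time a variable word over `α`: its line over `α` together with
the word itself is a line over `Option α`. Suppose that the density theorem fails over `Option α`,
and take a set `A` without lines whose density is almost the critical density `d`.

* All sections of `A` over the values of a bounded number of coordinates have density close to `d`.
  Hence, by the theorem over `α`, every large subspace of the words on these coordinates contains a
  word `w` with a letter `none` such that `A` contains the line over `α` with variable word `w`
  over a positive proportion `θ` of the continuations `v` (`exists_good_word`).
* By a Ramsey argument, `exists_ramsey`, a large subspace then consists entirely of such words `w`.
* The set of pairs `(w, v)` for which the line over `α` lies in `A` has density at least `θ`, and it
  is disjoint from `A`. For fixed `v` it is an intersection of sets that are insensitive to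
  exchanging `none` with one letter of `α`. A function whose averages over subspaces are nonpositive
  has almost nonpositive average on such sets and on their complements
  (`exists_partition`, `exists_partition_inter`), because dense insensitive sets contain subspaces
  (`exists_insens_hasSub`). So the density of `A` on the complement is at most slightly above `d`,
  and its total density is at most about `d * (1 - θ)` (`density_le_of_good`), a contradiction.
-/

namespace DensityHJ

open Finset Function
open scoped BigOperators

/-! ### Averages -/

/-- The average of a real function over a finite type (`0` on an empty type). Only `Finite` is
assumed, so that no choice of `Fintype` instance enters the statements. -/
noncomputable def av {X : Type*} [Finite X] (f : X → ℝ) : ℝ :=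
  letI := Fintype.ofFinite X
  𝔼 x, f x

/-- The indicator of a proposition. -/
noncomputable def ind (p : Prop) : ℝ := open Classical in if p then 1 else 0

section av
variable {X Y : Type*} [Finite X] [Finite Y]

lemma av_add (f g : X → ℝ) : av (fun x => f x + g x) = av f + av g :=
  Finset.expect_add_distrib _ _ _

lemma av_sub (f g : X → ℝ) : av (fun x => f x - g x) = av f - av g :=
  Finset.expect_sub_distrib _ _ _

lemma av_mul_left (c : ℝ) (f : X → ℝ) : av (fun x => c * f x) = c * av f :=
  (Finset.mul_expect _ _ _).symm

lemma av_const [Nonempty X] (c : ℝ) : av (fun _ : X => c) = c := by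
  let _ := Fintype.ofFinite X
  exact Fintype.expect_const c

lemma av_mono {f g : X → ℝ} (h : ∀ x, f x ≤ g x) : av f ≤ av g :=
  Finset.expect_le_expect fun x _ => h x

lemma av_nonneg {f : X → ℝ} (h : ∀ x, 0 ≤ f x) : 0 ≤ av f :=
  Finset.expect_nonneg fun x _ => h x

lemma av_le [Nonempty X] {f : X → ℝ} {c : ℝ} (h : ∀ x, f x ≤ c) : av f ≤ c :=
  (av_mono h).trans (av_const c).le

lemma le_av [Nonempty X] {f : X → ℝ} {c : ℝ} (h : ∀ x, c ≤ f x) : c ≤ av f :=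
  (av_const c).ge.trans (av_mono h)

lemma exists_le_of_le_av [Nonempty X] {f : X → ℝ} {c : ℝ} (h : c ≤ av f) : ∃ x, c ≤ f x := by
  by_contra! hc
  let _ := Fintype.ofFinite X
  obtain ⟨x, -, hx⟩ := Finset.exists_le_of_le_expect (univ_nonempty (α := X)) h
  exact absurd hx (not_le.2 (hc x))

lemma av_comm (f : X → Y → ℝ) : av (fun x => av (f x)) = av (fun y => av fun x => f x y) :=
  Finset.expect_comm _ _ _

lemma av_equiv (e : X ≃ Y) (f : Y → ℝ) : av (fun x => f (e x)) = av f := by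
  let _ := Fintype.ofFinite X
  let _ := Fintype.ofFinite Y
  exact Fintype.expect_equiv e _ _ fun _ => rfl

lemma av_prod (f : X × Y → ℝ) : av f = av (fun x => av fun y => f (x, y)) := by
  let _ := Fintype.ofFinite X
  let _ := Fintype.ofFinite Y
  have : av f = 𝔼 x, f x := by unfold av; congr!
  rw [this, ← Finset.univ_product_univ, Finset.expect_product]
  rfl

lemma av_eq_sum_div [Fintype X] (f : X → ℝ) : av f = (∑ x, f x) / Nat.card X := by
  have : av f = 𝔼 x, f x := by unfold av; congr!
  rw [this, Fintype.expect_eq_sum_div_card, Nat.card_eq_fintype_card]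

/-- A single value of a nonnegative function is at most `card X` times its average. -/
lemma le_card_mul_av {f : X → ℝ} (h : ∀ x, 0 ≤ f x) (x : X) : f x ≤ Nat.card X * av f := by
  let _ := Fintype.ofFinite X
  have : Nonempty X := ⟨x⟩
  have hc : (0 : ℝ) < Nat.card X := by exact_mod_cast Nat.card_pos
  rw [av_eq_sum_div, mul_div_cancel₀ _ hc.ne']
  exact Finset.single_le_sum (f := f) (fun y _ => h y) (Finset.mem_univ x)

lemma ind_nonneg (p : Prop) : 0 ≤ ind p := by unfold ind; split_ifs <;> norm_num
lemma ind_le_one (p : Prop) : ind p ≤ 1 := by unfold ind; split_ifs <;> norm_num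
lemma ind_of {p : Prop} (h : p) : ind p = 1 := if_pos h
lemma ind_of_not {p : Prop} (h : ¬ p) : ind p = 0 := if_neg h
lemma ind_mono {p q : Prop} (h : p → q) : ind p ≤ ind q := by
  by_cases hp : p
  · rw [ind_of hp, ind_of (h hp)]
  · rw [ind_of_not hp]; exact ind_nonneg q
lemma ind_not (p : Prop) : ind (¬ p) = 1 - ind p := by
  by_cases hp : p <;> simp [ind, hp]
lemma ind_and (p q : Prop) : ind (p ∧ q) = ind p * ind q := by
  by_cases hp : p <;> by_cases hq : q <;> simp [ind, hp, hq]
lemma ind_congr {p q : Prop} (h : p ↔ q) : ind p = ind q := by rw [propext h]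

/-- The density of a set in a finite type. -/
noncomputable def dens (A : Set X) : ℝ := av fun x => ind (x ∈ A)

lemma dens_nonneg (A : Set X) : 0 ≤ dens A := av_nonneg fun _ => ind_nonneg _

lemma dens_le_one (A : Set X) : dens A ≤ 1 := by
  rcases isEmpty_or_nonempty X with h | h
  · let _ := Fintype.ofFinite X
    simp [dens, av]
  · exact av_le fun _ => ind_le_one _

/-- Markov's inequality: if a `[0,1]`-valued function has average at least `2c`, then it is at
least `c` on a set of density at least `c`. -/
lemma le_av_ind_of_two_mul_le [Nonempty X] {f : X → ℝ} {c : ℝ} (hc : 0 ≤ c) (h1 : ∀ x, f x ≤ 1)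
    (h : 2 * c ≤ av f) : c ≤ av fun x => ind (c ≤ f x) := by
  have : av f ≤ av (fun x => ind (c ≤ f x) + c) := av_mono fun x => by
    by_cases hx : c ≤ f x
    · rw [ind_of hx]; linarith [h1 x]
    · rw [ind_of_not hx]; linarith
  rw [av_add, av_const] at this
  linarith

/-- Pigeonhole: if `r x` holds with a witness `k` in a finite type `K` for a set of `x` of density
`c`, then some fixed witness serves a set of density `c / card K`. -/
lemma exists_common_witness {K : Type*} [Finite K] (r : X → Prop) (P : K → X → Prop)
    (h : ∀ x, r x → ∃ k, P k x) (hc : 0 < av fun x => ind (r x)) :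
    ∃ k, (av fun x => ind (r x)) / Nat.card K ≤ av fun x => ind (P k x) := by
  let _ := Fintype.ofFinite K
  have hX : Nonempty X := by
    by_contra hX
    have : IsEmpty X := not_nonempty_iff.1 hX
    let _ := Fintype.ofFinite X
    simp [av] at hc
  have hK : Nonempty K := by
    obtain ⟨x, hx⟩ := exists_le_of_le_av (le_refl (av fun x => ind (r x)))
    by_cases hr : r x
    · exact ⟨(h x hr).choose⟩
    · rw [ind_of_not hr] at hx; linarith
  have hKpos : (0 : ℝ) < Nat.card K := by exact_mod_cast Nat.card_pos
  have key : (av fun x => ind (r x)) ≤ Nat.card K * av (fun k : K => av fun x => ind (P k x)) := by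
    rw [av_comm, ← av_mul_left]
    refine av_mono fun x => ?_
    by_cases hr : r x
    · obtain ⟨k, hk⟩ := h x hr
      refine le_trans ?_ (le_card_mul_av (fun k => ind_nonneg (P k x)) k)
      rw [ind_of hr, ind_of hk]
    · rw [ind_of_not hr]
      exact mul_nonneg hKpos.le (av_nonneg fun _ => ind_nonneg _)
  refine exists_le_of_le_av ?_
  rw [div_le_iff₀ hKpos]
  linarith

end av

/-! ### Words and combinatorial subspaces -/

section words
variable {α β η ι κ : Type}

/-- Averages over words on a disjoint union of index sets are iterated averages. -/
lemma av_words [Finite α] [Finite ι] [Finite κ] (f : (ι ⊕ κ → α) → ℝ) :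
    av f = av (fun u : ι → α => av fun v : κ → α => f (Sum.elim u v)) := by
  rw [← av_equiv (Equiv.sumArrowEquivProdArrow ι κ α).symm f, av_prod]
  rfl

lemma av_words' [Finite α] [Finite ι] [Finite κ] (f : (ι ⊕ κ → α) → ℝ) :
    av f = av (fun v : κ → α => av fun u : ι → α => f (Sum.elim u v)) := by
  rw [av_words, av_comm]

/-- `φ` parametrises a combinatorial subspace of `ι → α` of dimension `η`, all of whose constant
coordinates have their value in `C`: each coordinate of `φ x` is either a constant of `C` or one
fixed coordinate of `x`, and distinct coordinates of `x` occur at distinct places. (For an alphabet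
with one letter, asking only that each coordinate of `x` occurs would not determine a variable
word.) A combinatorial line is the case `η = Unit`. -/
structure IsSub (C : Set α) (φ : (η → α) → (ι → α)) : Prop where
  coord : ∀ i, (∃ a ∈ C, ∀ x, φ x i = a) ∨ ∃ e, ∀ x, φ x i = x e
  proper : ∃ s : η → ι, Injective s ∧ ∀ e x, φ x (s e) = x e

lemma IsSub.mono {C C' : Set α} {φ : (η → α) → (ι → α)} (h : IsSub C φ) (hC : C ⊆ C') :
    IsSub C' φ :=
  ⟨fun i => (h.coord i).imp_left fun ⟨a, ha, hx⟩ => ⟨a, hC ha, hx⟩, h.proper⟩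

lemma IsSub.univ {C : Set α} {φ : (η → α) → (ι → α)} (h : IsSub C φ) : IsSub Set.univ φ :=
  h.mono (Set.subset_univ C)

lemma IsSub.id (C : Set α) : IsSub C (fun x : η → α => x) :=
  ⟨fun i => .inr ⟨i, fun _ => rfl⟩, ⟨fun e => e, injective_id, fun _ _ => rfl⟩⟩

lemma IsSub.comp {C : Set α} {φ : (η → α) → (ι → α)} {ψ : (κ → α) → (η → α)} (h : IsSub C φ)
    (h' : IsSub C ψ) : IsSub C (fun x => φ (ψ x)) := by
  refine ⟨fun i => ?_, ?_⟩
  · rcases h.coord i with ⟨a, ha, hx⟩ | ⟨e, he⟩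
    · exact .inl ⟨a, ha, fun x => hx _⟩
    · rcases h'.coord e with ⟨a, ha, hx⟩ | ⟨e', he'⟩
      · exact .inl ⟨a, ha, fun x => by rw [he, hx]⟩
      · exact .inr ⟨e', fun x => by rw [he, he']⟩
  · obtain ⟨s, hs, h1⟩ := h.proper
    obtain ⟨t, ht, h2⟩ := h'.proper
    exact ⟨s ∘ t, hs.comp ht, fun e x => by simp [h1, h2]⟩

lemma IsSub.injective {C : Set α} {φ : (η → α) → (ι → α)} (h : IsSub C φ) : Injective φ := by
  intro x y hxy
  funext e
  obtain ⟨s, -, hs⟩ := h.proper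
  rw [← hs e x, ← hs e y, hxy]

lemma IsSub.reindex {C : Set α} {φ : (η → α) → (ι → α)} (h : IsSub C φ) (e : κ ≃ ι) :
    IsSub C (fun x => φ x ∘ e) := by
  refine ⟨fun i => h.coord (e i), ?_⟩
  obtain ⟨s, hs, h1⟩ := h.proper
  exact ⟨e.symm ∘ s, e.symm.injective.comp hs, fun j x => by simp [h1]⟩

lemma IsSub.reindexDom {C : Set α} {φ : (η → α) → (ι → α)} (h : IsSub C φ) (e : η ≃ κ) :
    IsSub C (fun x : κ → α => φ (x ∘ e)) := by
  refine ⟨fun i => (h.coord i).imp (fun ⟨a, ha, hx⟩ => ⟨a, ha, fun x => hx _⟩)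
    fun ⟨j, hj⟩ => ⟨e j, fun x => hj _⟩, ?_⟩
  obtain ⟨s, hs, h1⟩ := h.proper
  exact ⟨s ∘ e.symm, hs.comp e.symm.injective, fun j x => by simp [h1]⟩

/-- The product of two combinatorial subspaces. -/
lemma IsSub.prod {C : Set α} {ι' η' : Type} {φ : (η → α) → (ι → α)} {ψ : (η' → α) → (ι' → α)}
    (h : IsSub C φ) (h' : IsSub C ψ) :
    IsSub C (fun x : η ⊕ η' → α => Sum.elim (φ (x ∘ Sum.inl)) (ψ (x ∘ Sum.inr))) := by
  refine ⟨?_, ?_⟩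
  · rintro (i | i)
    · exact (h.coord i).imp (fun ⟨a, ha, hx⟩ => ⟨a, ha, fun x => hx _⟩)
        fun ⟨j, hj⟩ => ⟨.inl j, fun x => hj _⟩
    · exact (h'.coord i).imp (fun ⟨a, ha, hx⟩ => ⟨a, ha, fun x => hx _⟩)
        fun ⟨j, hj⟩ => ⟨.inr j, fun x => hj _⟩
  · obtain ⟨s, hs, h1⟩ := h.proper
    obtain ⟨t, ht, h2⟩ := h'.proper
    refine ⟨Sum.map s t, hs.sumMap ht, ?_⟩
    rintro (j | j) x
    · exact h1 _ _
    · exact h2 _ _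

lemma IsSub.elim_left {C : Set α} {φ : (η → α) → (ι → α)} (h : IsSub C φ) {v : κ → α}
    (hv : ∀ j, v j ∈ C) : IsSub C (fun x => Sum.elim (φ x) v) := by
  refine ⟨?_, ?_⟩
  · rintro (i | i)
    · exact h.coord i
    · exact .inl ⟨v i, hv i, fun _ => rfl⟩
  · obtain ⟨s, hs, h1⟩ := h.proper
    exact ⟨Sum.inl ∘ s, Sum.inl_injective.comp hs, h1⟩

lemma IsSub.elim_right {C : Set α} {φ : (η → α) → (ι → α)} (h : IsSub C φ) {v : κ → α}
    (hv : ∀ j, v j ∈ C) : IsSub C (fun x => Sum.elim v (φ x)) := by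
  refine ⟨?_, ?_⟩
  · rintro (i | i)
    · exact .inl ⟨v i, hv i, fun _ => rfl⟩
    · exact h.coord i
  · obtain ⟨s, hs, h1⟩ := h.proper
    exact ⟨Sum.inr ∘ s, Sum.inr_injective.comp hs, h1⟩

/-- The Hales-Jewett theorem for the predicate `IsSub`. -/
lemma exists_mono (α K η : Type) [Finite α] [Finite K] [Finite η] :
    ∃ (ι : Type) (_ : Finite ι), ∀ c : (ι → α) → K, ∃ φ : (η → α) → (ι → α),
      IsSub Set.univ φ ∧ ∃ k, ∀ x, c (φ x) = k := by
  obtain ⟨ι, _, h⟩ := Combinatorics.Subspace.exists_mono_in_high_dimension α K η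
  refine ⟨ι, inferInstance, fun c => ?_⟩
  obtain ⟨l, k, hk⟩ := h c
  choose s hs using l.proper
  refine ⟨l, ⟨fun i => ?_, s, fun e e' he => ?_, fun e x => l.apply_inr (hs e)⟩, k, hk⟩
  · rcases hi : l.idxFun i with a | e
    · exact .inl ⟨a, trivial, fun x => l.apply_inl hi⟩
    · exact .inr ⟨e, fun x => l.apply_inr hi⟩
  · exact Sum.inr_injective ((hs e).symm.trans (he ▸ hs e'))

end words

/-! ### Density statements and the multidimensional version -/

section dense
variable {α η ι κ : Type}

/-- Every set of density at least `δ` of words of shape `ι` contains a subspace of dimension `η`. -/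
def HasSub (α η ι : Type) [Finite α] [Finite ι] (δ : ℝ) : Prop :=
  ∀ A : Set (ι → α), δ ≤ dens A → ∃ φ : (η → α) → (ι → α), IsSub Set.univ φ ∧ ∀ x, φ x ∈ A

/-- The density Hales-Jewett property of the alphabet `α` at density `δ`. -/
def DHJ (α : Type) [Finite α] (δ : ℝ) : Prop :=
  ∃ (ι : Type) (_ : Finite ι), HasSub α Unit ι δ

/-- `HasSub` passes to larger index sets: some section over the extra coordinates is dense. -/
lemma HasSub.of_card_le [Finite α] [Nonempty α] [Finite ι] [Finite κ] {δ : ℝ}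
    (h : HasSub α η ι δ) (hc : Nat.card ι ≤ Nat.card κ) : HasSub α η κ δ := by
  intro A hA
  obtain ⟨m, hm⟩ := Nat.exists_eq_add_of_le hc
  obtain ⟨e⟩ : Nonempty (κ ≃ ι ⊕ Fin m) := Finite.card_eq.1 (by rw [hm, Nat.card_sum, Nat.card_fin])
  have hA' : δ ≤ av fun v : Fin m → α => av fun u : ι → α => ind (Sum.elim u v ∘ e ∈ A) := by
    rw [← av_words' (fun x => ind (x ∘ e ∈ A)),
      ← av_equiv (e.arrowCongr (Equiv.refl α)) (fun x => ind (x ∘ e ∈ A))]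
    refine hA.trans (le_of_eq ?_)
    unfold dens
    congr! with x
    funext i
    simp [Equiv.arrowCongr]
  obtain ⟨v, hv⟩ := exists_le_of_le_av hA'
  obtain ⟨φ, hφ, hmem⟩ := h {u | Sum.elim u v ∘ e ∈ A} hv
  exact ⟨_, (hφ.elim_left (v := v) fun _ => trivial).reindex e, hmem⟩

/-- Probabilistic form of `HasSub`: in a family of sets of large average density, one common
subspace is contained in a positive proportion of the sets. -/
lemma HasSub.common [Finite α] [Finite η] [Finite ι] {Y : Type} [Finite Y] {δ : ℝ}
    (hδ : 0 < δ) (h : HasSub α η ι δ) (A : Y → Set (ι → α)) (hA : 2 * δ ≤ av fun y => dens (A y)) :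
    ∃ φ : (η → α) → (ι → α), IsSub Set.univ φ ∧
      δ / Nat.card ((η → α) → (ι → α)) ≤ av fun y => ind (∀ x, φ x ∈ A y) := by
  have hY : Nonempty Y := by
    by_contra hY
    have : IsEmpty Y := not_nonempty_iff.1 hY
    let _ := Fintype.ofFinite Y
    simp [av] at hA
    linarith
  have h1 := le_av_ind_of_two_mul_le hδ.le (fun y => dens_le_one (A y)) hA
  obtain ⟨φ, hφ⟩ := exists_common_witness (fun y => δ ≤ dens (A y))
    (fun (φ : (η → α) → (ι → α)) y => IsSub Set.univ φ ∧ ∀ x, φ x ∈ A y)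
    (fun y hy => h (A y) hy) (hδ.trans_le h1)
  have hK : (0 : ℝ) ≤ Nat.card ((η → α) → (ι → α)) := Nat.cast_nonneg _
  have h2 : δ / Nat.card ((η → α) → (ι → α)) ≤
      av fun y => ind (IsSub Set.univ φ ∧ ∀ x, φ x ∈ A y) :=
    le_trans (div_le_div_of_nonneg_right h1 hK) hφ
  have hpos : 0 < δ / Nat.card ((η → α) → (ι → α)) := by
    have : Nonempty ((η → α) → (ι → α)) := ⟨φ⟩
    have : (0 : ℝ) < Nat.card ((η → α) → (ι → α)) := by exact_mod_cast Nat.card_pos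
    positivity
  refine ⟨φ, ?_, h2.trans (av_mono fun y => ind_mono And.right)⟩
  by_contra hn
  rw [show (fun y => ind (IsSub Set.univ φ ∧ ∀ x, φ x ∈ A y)) = fun _ => (0 : ℝ) from
    funext fun y => ind_of_not fun hh => hn hh.1, av_const] at h2
  linarith

/-- Multidimensional density Hales-Jewett: the dimension is built up one line at a time. -/
lemma exists_hasSub [Finite α] [Nonempty α] (h : ∀ δ > 0, DHJ α δ) (η : Type) [Finite η] :
    ∀ δ > 0, ∃ (ι : Type) (_ : Finite ι), HasSub α η ι δ := by
  refine Finite.induction_empty_option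
    (P := fun η : Type => Finite η → ∀ δ > 0, ∃ (ι : Type) (_ : Finite ι), HasSub α η ι δ)
    ?_ ?_ ?_ η inferInstance
  · intro η η' e ih _ δ hδ
    obtain ⟨ι, hι, hs⟩ := ih (Finite.of_equiv _ e.symm) δ hδ
    refine ⟨ι, hι, fun A hA => ?_⟩
    obtain ⟨φ, hφ, hm⟩ := hs A hA
    exact ⟨_, hφ.reindexDom e, fun x => hm _⟩
  · intro _ δ hδ
    refine ⟨Empty, inferInstance, fun A hA => ?_⟩
    obtain ⟨p, hp⟩ : A.Nonempty := by
      by_contra hn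
      rw [Set.not_nonempty_iff_eq_empty] at hn
      have : dens A = 0 := by
        rw [dens, hn, ← av_const (X := Empty → α) 0]
        congr! with x
        exact ind_of_not id
      linarith
    exact ⟨fun _ => p, ⟨fun i => i.elim, fun e => e.elim, fun e => e.elim, fun e => e.elim⟩, fun _ => hp⟩
  · intro η _ ih _ δ hδ
    obtain ⟨ι₁, _, h₁⟩ := h (δ / 2) (by positivity)
    set K : ℝ := (Nat.card ((Unit → α) → (ι₁ → α)) : ℝ) with hK
    have hKpos : 0 < K := by rw [hK]; exact_mod_cast Nat.card_pos
    obtain ⟨ι₂, _, h₂⟩ := ih inferInstance (δ / 2 / K) (by positivity)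
    refine ⟨ι₁ ⊕ ι₂, inferInstance, fun A hA => ?_⟩
    rw [dens, av_words'] at hA
    obtain ⟨φ, hφ, hd⟩ := h₁.common (by positivity) (fun v : ι₂ → α => {u | Sum.elim u v ∈ A})
      (le_trans (by linarith) hA)
    obtain ⟨ψ, hψ, hm⟩ := h₂ {v | ∀ x, Sum.elim (φ x) v ∈ A} hd
    refine ⟨_, (hφ.prod hψ).reindexDom ((Equiv.sumComm _ _).trans
      (Equiv.optionEquivSumPUnit η).symm), fun x => hm _ _⟩

end dense

/-! ### The enlarged alphabet `Option α` and insensitive sets -/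

section option
variable {α η ι κ : Type}

/-- Replace each occurrence of the extra letter `none` in a word by the letter `a`. -/
def rep (a : α) (x : ι → Option α) : ι → Option α := fun i => some ((x i).getD a)

/-- `D` is `a`-insensitive: membership does not change when letters `none` and `a` are
exchanged, i.e. it depends only on the word with `none` replaced by `a`. -/
def Insens (a : α) (D : Set (ι → Option α)) : Prop := ∀ x, x ∈ D ↔ rep a x ∈ D

lemma Insens.congr {a : α} {D : Set (ι → Option α)} (h : Insens a D) {x y : ι → Option α}
    (hxy : rep a x = rep a y) : x ∈ D ↔ y ∈ D := by
  rw [h x, h y, hxy]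

lemma Insens.compl {a : α} {D : Set (ι → Option α)} (h : Insens a D) : Insens a Dᶜ :=
  fun x => not_congr (h x)

lemma rep_rep (a : α) (x : ι → Option α) : rep a (rep a x) = rep a x := by
  funext i; simp [rep]

lemma rep_apply_rep {φ : (η → Option α) → (ι → Option α)} {C : Set (Option α)} (h : IsSub C φ)
    (a : α) (x : η → Option α) : rep a (φ (rep a x)) = rep a (φ x) := by
  funext i
  rcases h.coord i with ⟨b, -, hb⟩ | ⟨e, he⟩
  · simp [rep, hb]
  · simp [rep, he]

/-- A subspace without constant coordinates `none` commutes with `rep`. -/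
lemma rep_apply {φ : (η → Option α) → (ι → Option α)} (h : IsSub (Set.range some) φ)
    (a : α) (x : η → Option α) : rep a (φ x) = φ (rep a x) := by
  funext i
  rcases h.coord i with ⟨b, ⟨c, rfl⟩, hb⟩ | ⟨e, he⟩
  · simp [rep, hb]
  · simp [rep, he]

lemma Insens.preimage {φ : (η → Option α) → (ι → Option α)} {C : Set (Option α)}
    (h : IsSub C φ) {a : α} {D : Set (ι → Option α)} (hD : Insens a D) : Insens a (φ ⁻¹' D) :=
  fun x => hD.congr (rep_apply_rep h a x).symm

/-- A subspace over `α` extends to a subspace over `Option α` with the same variable word. -/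
lemma IsSub.exists_lift {φ : (η → α) → (ι → α)} (h : IsSub Set.univ φ) :
    ∃ φ' : (η → Option α) → (ι → Option α), IsSub (Set.range some) φ' ∧
      ∀ x : η → α, φ' (fun e => some (x e)) = fun i => some (φ x i) := by
  classical
  obtain ⟨s, hs, h1⟩ := h.proper
  have key : ∀ i, ∃ g : (η → Option α) → Option α,
      ((∃ a ∈ Set.range (some : α → Option α), ∀ x, g x = a) ∨ ∃ e, ∀ x, g x = x e) ∧
      (∀ e, s e = i → ∀ x, g x = x e) ∧
      ∀ x : η → α, g (fun e => some (x e)) = some (φ x i) := by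
    intro i
    by_cases hi : ∃ e, s e = i
    · obtain ⟨e, rfl⟩ := hi
      exact ⟨fun x => x e, .inr ⟨e, fun _ => rfl⟩, fun e' he' x => by rw [hs he'],
        fun x => by rw [h1]⟩
    · rcases h.coord i with ⟨a, -, ha⟩ | ⟨e, he⟩
      · exact ⟨fun _ => some a, .inl ⟨_, ⟨a, rfl⟩, fun _ => rfl⟩, fun e he => (hi ⟨e, he⟩).elim,
          fun x => by rw [ha]⟩
      · exact ⟨fun x => x e, .inr ⟨e, fun _ => rfl⟩, fun e he => (hi ⟨e, he⟩).elim,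
          fun x => by rw [he]⟩
  choose g hg1 hg2 hg3 using key
  exact ⟨fun x i => g i x, ⟨hg1, s, hs, fun e x => hg2 _ e rfl x⟩,
    fun x => funext fun i => hg3 i x⟩

end option

/-! ### Dense insensitive sets contain subspaces -/

section weighted
variable {α η ι κ : Type}

/-- Keep the positions of `none` in `y` and overwrite all other letters by those of `u`. -/
def mix (y : ι → Option α) (u : ι → α) : ι → Option α := fun j => (y j).map fun _ => u j

/-- A uniform word over `Option α` arises by choosing the positions of `none` from a uniform word
and then filling in the other places by a uniform word over `α`. -/
lemma av_mix [Finite α] [Nonempty α] [Finite ι] (g : (ι → Option α) → ℝ) :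
    av g = av fun y => av fun u : ι → α => g (mix y u) := by
  obtain ⟨n, ⟨e⟩⟩ := Finite.exists_equiv_fin α
  have : NeZero n := ⟨by
    rintro rfl
    exact (e (Classical.arbitrary α)).elim0⟩
  let _ : AddGroup α := e.addGroup
  -- Averaging over a random translation of the letters does not change the average.
  have h1 : av g = av fun u : ι → α => av fun y : ι → Option α =>
      g (fun j => (y j).map (u j + ·)) := by
    rw [← av_const (X := ι → α) (av g)]
    refine congrArg av (funext fun u => ?_)
    exact (av_equiv (Equiv.piCongrRight fun j => Equiv.optionCongr (Equiv.addLeft (u j))) g).symm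
  rw [h1, av_comm]
  refine congrArg av (funext fun y => ?_)
  rw [← av_equiv (Equiv.addRight fun j => (y j).getD 0) (fun u => g (mix y u))]
  congr! with u j
  rcases hj : y j with _ | b <;> simp [mix, hj]

/-- Averages over words on `ι` of functions depending only on a subset of the coordinates. -/
lemma av_restrict [Finite α] [Nonempty α] [Finite ι] (p : ι → Prop)
    (F : ({j // p j} → α) → ℝ) : (av fun u : ι → α => F fun j => u j) = av F := by
  classical
  rw [← av_equiv ((Equiv.sumCompl p).arrowCongr (Equiv.refl α)) (fun u : ι → α => F fun j => u j),
    av_words]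
  congr! with v
  rw [← av_const (X := {j // ¬ p j} → α) (F v)]
  congr! with w j
  simp [Equiv.arrowCongr]

/-- Few words have fewer than `N` letters different from `none`. -/
lemma exists_av_few_lt [Finite α] [Nonempty α] (N : ℕ) {ε : ℝ} (hε : 0 < ε) :
    ∃ n : ℕ, (av fun y : Fin n → Option α => ind (Nat.card {j // y j ≠ none} < N)) < ε := by
  classical
  let _ := Fintype.ofFinite α
  -- Exponential moment: the letter `none` has weight `1`, every other letter has weight `1/2`.
  let g : Option α → ℝ := fun b => if b = none then 1 else 1 / 2
  have hg0 : ∀ b, 0 < g b := fun b => by dsimp only [g]; split_ifs <;> norm_num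
  set q : ℝ := 𝔼 b, g b with hq
  have hq0 : 0 ≤ q := Finset.expect_nonneg fun b _ => (hg0 b).le
  have hq1 : q < 1 := by
    refine Finset.expect_lt (fun b _ => ?_) ⟨some (Classical.arbitrary α), mem_univ _, ?_⟩
    · dsimp only [g]; split_ifs <;> norm_num
    · dsimp only [g]; rw [if_neg (by simp)]; norm_num
  have hprod : ∀ n : ℕ, (av fun y : Fin n → Option α => ∏ j, g (y j)) = q ^ n := by
    intro n
    have : (av fun y : Fin n → Option α => ∏ j, g (y j)) =
      𝔼 y : Fin n → Option α, ∏ j, g (y j) := by unfold av; congr!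
    rw [this, hq, Finset.expect_pow, Fintype.piFinset_univ]
  obtain ⟨n, hn⟩ := exists_pow_lt_of_lt_one (show 0 < ε / 2 ^ N by positivity) hq1
  refine ⟨n, ?_⟩
  calc (av fun y : Fin n → Option α => ind (Nat.card {j // y j ≠ none} < N))
      ≤ av fun y : Fin n → Option α => 2 ^ N * ∏ j, g (y j) := by
        refine av_mono fun y => ?_
        have hp : ∏ j, g (y j) = (1 / 2) ^ (Nat.card {j // y j ≠ none}) := by
          rw [Nat.card_eq_fintype_card, Fintype.card_subtype, Finset.prod_ite]
          simp
        by_cases hy : Nat.card {j // y j ≠ none} < N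
        · rw [ind_of hy, hp, div_pow, one_pow, mul_one_div, le_div_iff₀ (by positivity), one_mul]
          exact pow_le_pow_right₀ (by norm_num) hy.le
        · rw [ind_of_not hy]
          exact mul_nonneg (by positivity) (prod_nonneg fun j _ => (hg0 _).le)
    _ = 2 ^ N * q ^ n := by rw [av_mul_left, hprod]
    _ < ε := by
        rw [lt_div_iff₀ (by positivity)] at hn
        linarith

/-- A dense insensitive set of words over `Option α` contains a subspace over `Option α`, granted
the density theorem over `α`. Replacing `none` by `a` maps the uniform measure to a product measure
in which the letter `a` has double weight; fixing the places where `none` stood brings back the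
uniform measure on words over `α`. -/
lemma exists_insens_hasSub [Finite α] [Nonempty α] (h : ∀ δ > 0, DHJ α δ) (η : Type) [Finite η]
    (a : α) {ε : ℝ} (hε : 0 < ε) : ∃ (ι : Type) (_ : Finite ι), ∀ D : Set (ι → Option α),
      Insens a D → ε ≤ dens D →
      ∃ φ : (η → Option α) → (ι → Option α), IsSub Set.univ φ ∧ ∀ x, φ x ∈ D := by
  classical
  obtain ⟨ι₀, _, h₀⟩ := exists_hasSub h η (ε / 2) (by positivity)
  obtain ⟨n, hn⟩ := exists_av_few_lt (α := α) (Nat.card ι₀) (half_pos hε)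
  refine ⟨Fin n, inferInstance, fun D hD hd => ?_⟩
  let p (y : Fin n → Option α) (v : {j // y j ≠ none} → α) : Fin n → Option α :=
    fun j => if hj : y j ≠ none then some (v ⟨j, hj⟩) else some a
  have hp : ∀ y (u : Fin n → α), ind (mix y u ∈ D) = ind (p y (fun j => u j) ∈ D) := by
    refine fun y u => ind_congr (hD.congr ?_)
    funext j
    rcases hj : y j with _ | b <;> simp [rep, mix, p, hj]
  obtain ⟨y, hy1, hy2⟩ : ∃ y : Fin n → Option α, Nat.card ι₀ ≤ Nat.card {j // y j ≠ none} ∧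
      ε / 2 ≤ dens {v | p y v ∈ D} := by
    by_contra! hcon
    have : dens D ≤ av fun y : Fin n → Option α =>
        ind (Nat.card {j // y j ≠ none} < Nat.card ι₀) + ε / 2 := by
      rw [dens, av_mix]
      refine av_mono fun y => ?_
      simp only [hp y]
      rw [av_restrict (fun j => y j ≠ none) (fun v => ind (p y v ∈ D))]
      change dens {v | p y v ∈ D} ≤ _
      by_cases hc : Nat.card {j // y j ≠ none} < Nat.card ι₀
      · rw [ind_of hc]
        linarith [dens_le_one {v | p y v ∈ D}]
      · rw [ind_of_not hc]
        linarith [hcon y (not_lt.1 hc)]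
    rw [av_add, av_const] at this
    linarith
  obtain ⟨φ, hφ, hm⟩ := (h₀.of_card_le hy1) _ hy2
  obtain ⟨φ', hφ', he⟩ := hφ.exists_lift
  refine ⟨fun x j => if hj : y j ≠ none then φ' x ⟨j, hj⟩ else some a, ⟨fun j => ?_, ?_⟩,
    fun x => ?_⟩
  · by_cases hj : y j ≠ none
    · simpa [hj] using hφ'.univ.coord ⟨j, hj⟩
    · exact .inl ⟨some a, trivial, fun x => by simp [hj]⟩
  · obtain ⟨s, hs, h1⟩ := hφ'.proper
    exact ⟨fun e => s e, Subtype.val_injective.comp hs, fun e x => by simp [(s e).2, h1]⟩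
  · refine (hD.congr ?_).1 (hm fun e => (x e).getD a)
    funext j
    by_cases hj : y j ≠ none
    · have := congrFun (he fun e => (x e).getD a) ⟨j, hj⟩
      have h2 := congrFun (rep_apply hφ' a x) ⟨j, hj⟩
      simp only [rep] at h2 this ⊢
      simp only [p, hj, dif_pos, not_false_eq_true, ne_eq]
      rw [h2]
      exact this.symm
    · simp only [rep, p, dif_neg hj]

end weighted

/-! ### Functions with nonpositive averages on subspaces and insensitive sets -/

section partition
variable {α η ι κ : Type}

/-- `f` is at most `1` and has nonpositive average over every subspace of dimension `η`. -/
def SubNonpos (η : Type) [Finite α] [Finite η] (f : (ι → α) → ℝ) : Prop :=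
  (∀ x, f x ≤ 1) ∧ ∀ φ : (η → α) → (ι → α), IsSub Set.univ φ → av (fun x => f (φ x)) ≤ 0

lemma av_mul_ind_range_le [Finite α] [Finite η] [Finite ι] {φ : (η → α) → (ι → α)}
    (hφ : Injective φ) {f : (ι → α) → ℝ} (hf : av (fun x => f (φ x)) ≤ 0) :
    av (fun x => f x * ind (x ∈ Set.range φ)) ≤ 0 := by
  let _ := Fintype.ofFinite (ι → α)
  let _ := Fintype.ofFinite (η → α)
  have h1 : ∑ y, f (φ y) = ∑ x, f x * ind (x ∈ Set.range φ) := by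
    refine Finset.sum_of_injOn φ hφ.injOn (by simp) (fun x _ hx => ?_) (fun y _ => ?_)
    · rw [ind_of_not (by simpa using hx), mul_zero]
    · rw [ind_of ⟨y, rfl⟩, mul_one]
  rw [av_eq_sum_div] at hf ⊢
  rw [← h1]
  rcases isEmpty_or_nonempty (η → α) with he | he
  · simp
  · have : (0 : ℝ) < Nat.card (η → α) := by exact_mod_cast Nat.card_pos
    rw [div_le_iff₀ this, zero_mul] at hf
    exact div_nonpos_of_nonpos_of_nonneg hf (Nat.cast_nonneg _)

/-- Almost all of an insensitive set is a disjoint union of subspaces; hence a function with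
nonpositive averages on subspaces has almost nonpositive average on an insensitive set. To find the
subspaces, split the words into two parts `(u, v)`. For a positive proportion of the `v` the section
over `v` is dense, so `exists_insens_hasSub` gives a subspace in it, and a fixed proportion of the
set is removed. For each fixed `u`, what remains is insensitive in `v`, so this can be iterated. -/
lemma exists_partition [Finite α] [Nonempty α] (h : ∀ δ > 0, DHJ α δ) (η : Type) [Finite η]
    (a : α) {ε : ℝ} (hε : 0 < ε) : ∃ (ι : Type) (_ : Finite ι), ∀ D : Set (ι → Option α),
      Insens a D → ∀ f : (ι → Option α) → ℝ, SubNonpos η f →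
      av (fun x => f x * ind (x ∈ D)) ≤ ε := by
  classical
  set ε' : ℝ := min ε 1 / 2 with hε'
  have he0 : 0 < ε' := by positivity
  have he1 : ε' ≤ ε / 2 := div_le_div_of_nonneg_right (min_le_left _ _) (by norm_num)
  have he2 : ε' ≤ 1 / 2 := div_le_div_of_nonneg_right (min_le_right _ _) (by norm_num)
  obtain ⟨ι₀, _, h₀⟩ := exists_insens_hasSub h η a (half_pos he0)
  set N : ℝ := (Nat.card (ι₀ → Option α) : ℝ) with hN
  have hN1 : 1 ≤ N := by rw [hN]; exact_mod_cast Nat.card_pos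
  have hR : ∀ E : Set (ι₀ → Option α), ∃ R ⊆ E,
      (∀ f : (ι₀ → Option α) → ℝ, SubNonpos η f → av (fun x => f x * ind (x ∈ R)) ≤ 0) ∧
      (Insens a E → ε' / 2 ≤ dens E → 1 / N ≤ dens R) := by
    intro E
    by_cases hE : ∃ φ : (η → Option α) → (ι₀ → Option α), IsSub Set.univ φ ∧ ∀ x, φ x ∈ E
    · obtain ⟨φ, hφ, hm⟩ := hE
      refine ⟨Set.range φ, by rintro _ ⟨x, rfl⟩; exact hm x,
        fun f hf => av_mul_ind_range_le hφ.injective (hf.2 φ hφ), fun _ _ => ?_⟩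
      rw [div_le_iff₀ (by linarith), mul_comm]
      refine le_trans (le_of_eq ?_) (le_card_mul_av (fun x => ind_nonneg (x ∈ Set.range φ))
        (φ fun _ => none))
      rw [ind_of ⟨_, rfl⟩]
    · refine ⟨∅, Set.empty_subset _, fun f _ => le_of_eq ?_, fun h1 h2 => (hE (h₀ E h1 h2)).elim⟩
      rw [← av_const (X := ι₀ → Option α) 0]
      congr! with x
      rw [ind_of_not (by simp), mul_zero]
  choose R hRE hRf hRd using hR
  set c : ℝ := ε' / 2 / N with hc
  have hc0 : 0 < c := by positivity
  have hc1 : c ≤ 1 / 4 := by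
    rw [hc, div_le_iff₀ (by linarith)]; linarith
  have key : ∀ T : ℕ, ∃ (ι : Type) (_ : Finite ι), ∀ D : Set (ι → Option α),
      Insens a D → ∀ f : (ι → Option α) → ℝ, SubNonpos η f →
      av (fun x => f x * ind (x ∈ D)) ≤ ε' + (1 - c) ^ T * dens D := by
    have htriv : ∀ (ι : Type) [Finite ι] (D : Set (ι → Option α)) (f : (ι → Option α) → ℝ),
        SubNonpos η f → av (fun x => f x * ind (x ∈ D)) ≤ dens D := fun ι _ D f hf =>
      av_mono fun x => mul_le_of_le_one_left (ind_nonneg _) (hf.1 x)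
    intro T
    induction T with
    | zero =>
      refine ⟨Empty, inferInstance, fun D hD f hf => ?_⟩
      have := htriv Empty D f hf
      simp only [pow_zero, one_mul]
      linarith
    | succ T ih =>
      obtain ⟨ι₁, _, h₁⟩ := ih
      refine ⟨ι₀ ⊕ ι₁, inferInstance, fun D hD f hf => ?_⟩
      have hρ : 0 ≤ (1 - c) ^ T := pow_nonneg (by linarith) T
      rcases le_total (dens D) ε' with hs | hs
      · refine (htriv _ D f hf).trans (hs.trans ?_)
        have := mul_nonneg (pow_nonneg (show 0 ≤ 1 - c by linarith) (T + 1)) (dens_nonneg D)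
        linarith
      let S (v : ι₁ → Option α) : Set (ι₀ → Option α) := {u | Sum.elim u v ∈ D}
      have hrep : ∀ (u : ι₀ → Option α) (v : ι₁ → Option α),
          rep a (Sum.elim u v) = Sum.elim (rep a u) (rep a v) := by
        intro u v; funext i; rcases i with i | i <;> rfl
      have hS : ∀ v, Insens a (S v) := fun v u => hD.congr (by rw [hrep, hrep, rep_rep])
      have hSrep : ∀ v, S (rep a v) = S v := fun v => Set.ext fun u =>
        hD.congr (by rw [hrep, hrep, rep_rep])
      let D' : Set (ι₀ ⊕ ι₁ → Option α) :=
        {x | x ∈ D ∧ x ∘ Sum.inl ∉ R (S (x ∘ Sum.inr))}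
      have hmem : ∀ u v, ind (Sum.elim u v ∈ D) =
          ind (u ∈ R (S v)) + ind (Sum.elim u v ∈ D') := by
        intro u v
        have e : Sum.elim u v ∈ D' ↔ Sum.elim u v ∈ D ∧ ¬ u ∈ R (S v) := Iff.rfl
        by_cases h1 : u ∈ R (S v)
        · have h2 : Sum.elim u v ∈ D := hRE _ h1
          rw [ind_of h1, ind_of h2, ind_of_not fun h3 => (e.1 h3).2 h1, add_zero]
        · rw [ind_of_not h1, zero_add]
          exact ind_congr (by rw [e]; simp [h1])
      -- The removed part has density at least `c`.
      have hd : dens D' ≤ (1 - c) * dens D := by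
        have e1 : dens D = (av fun v => dens (R (S v))) + dens D' := by
          rw [dens, dens, av_words', av_words' (fun x => ind (x ∈ D')), ← av_add]
          refine congrArg av (funext fun v => ?_)
          rw [dens, ← av_add]
          exact congrArg av (funext fun u => hmem u v)
        have e2 : ε' / 2 ≤ av fun v => ind (ε' / 2 ≤ dens (S v)) := by
          refine le_av_ind_of_two_mul_le (by positivity) (fun v => dens_le_one _) ?_
          rw [dens, av_words'] at hs
          exact le_trans (by linarith) hs
        have e3 : c ≤ av fun v => dens (R (S v)) := by
          have : (1 / N) * av (fun v => ind (ε' / 2 ≤ dens (S v))) ≤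
              av fun v => dens (R (S v)) := by
            rw [← av_mul_left]
            refine av_mono fun v => ?_
            by_cases hv : ε' / 2 ≤ dens (S v)
            · rw [ind_of hv, mul_one]; exact hRd _ (hS v) hv
            · rw [ind_of_not hv, mul_zero]; exact dens_nonneg _
          refine le_trans ?_ this
          rw [hc, div_eq_mul_one_div, mul_comm]
          exact mul_le_mul_of_nonneg_left e2 (by positivity)
        have e4 := mul_le_of_le_one_right hc0.le (dens_le_one D)
        linarith
      have hf1 : ∀ v : ι₁ → Option α, SubNonpos η (fun u => f (Sum.elim u v)) := fun v =>
        ⟨fun u => hf.1 _, fun φ hφ => hf.2 _ (hφ.elim_left (v := v) fun _ => trivial)⟩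
      have hf2 : ∀ u : ι₀ → Option α, SubNonpos η (fun v => f (Sum.elim u v)) := fun u =>
        ⟨fun v => hf.1 _, fun φ hφ => hf.2 _ (hφ.elim_right (v := u) fun _ => trivial)⟩
      have a1 : av (fun x => f x * ind (x ∈ D)) =
          (av fun v => av fun u => f (Sum.elim u v) * ind (u ∈ R (S v))) +
          av fun u => av fun v => f (Sum.elim u v) * ind (Sum.elim u v ∈ D') := by
        rw [av_comm (fun u v => f (Sum.elim u v) * ind (Sum.elim u v ∈ D')), ← av_add, av_words']
        refine congrArg av (funext fun v => ?_)
        rw [← av_add]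
        exact congrArg av (funext fun u => by rw [hmem, mul_add])
      have a2 : (av fun v => av fun u => f (Sum.elim u v) * ind (u ∈ R (S v))) ≤ 0 :=
        av_le fun v => hRf _ _ (hf1 v)
      have a3 : (av fun u => av fun v => f (Sum.elim u v) * ind (Sum.elim u v ∈ D')) ≤
          ε' + (1 - c) ^ T * dens D' := by
        rw [dens, av_words, ← av_mul_left, ← av_const (X := ι₀ → Option α) ε', ← av_add]
        refine av_mono fun u => ?_
        refine h₁ {v | Sum.elim u v ∈ D'} (fun v => ?_) _ (hf2 u)
        change (Sum.elim u v ∈ D ∧ u ∉ R (S v)) ↔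
          (Sum.elim u (rep a v) ∈ D ∧ u ∉ R (S (rep a v)))
        rw [hSrep]
        exact and_congr_left' (hD.congr (by rw [hrep, hrep, rep_rep]))
      have a4 := mul_le_mul_of_nonneg_left hd hρ
      rw [pow_succ]
      linarith
  obtain ⟨T, hT⟩ := exists_pow_lt_of_lt_one he0 (show 1 - c < 1 by linarith)
  obtain ⟨ι, hι, hk⟩ := key T
  refine ⟨ι, hι, fun D hD f hf => (hk D hD f hf).trans ?_⟩
  have := mul_le_of_le_one_right (pow_nonneg (show 0 ≤ 1 - c by linarith) T) (dens_le_one D)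
  linarith

end partition

section inter
variable {α η ι κ : Type}

lemma mul_ind_le_one {r : ℝ} (hr : r ≤ 1) (p : Prop) : r * ind p ≤ 1 := by
  by_cases hp : p
  · rwa [ind_of hp, mul_one]
  · rw [ind_of_not hp, mul_zero]; exact zero_le_one

/-- `exists_partition` for intersections of insensitive sets of different types, and for the
complements of such intersections. The letters are treated one at a time: if `f` has almost
nonpositive average on the part of any subspace lying in the intersection `C` for the previous
letters, then `exists_partition` applies to `f` times the indicator of `C`. -/
lemma exists_partition_inter [Finite α] [Nonempty α] (h : ∀ δ > 0, DHJ α δ) (l : List α) :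
    ∀ (η : Type) [Finite η] (ε : ℝ), 0 < ε → ∃ (ι : Type) (_ : Finite ι),
      ∀ f : (ι → Option α) → ℝ, SubNonpos η f →
      ∀ D : α → Set (ι → Option α), (∀ a, Insens a (D a)) →
      av (fun x => f x * ind (∀ a ∈ l, x ∈ D a)) ≤ ε ∧
      av (fun x => f x * ind (¬ ∀ a ∈ l, x ∈ D a)) ≤ ε := by
  induction l with
  | nil =>
    intro η _ ε hε
    refine ⟨η, inferInstance, fun f hf D hD => ⟨?_, ?_⟩⟩
    · simp only [ind_of (p := ∀ a ∈ ([] : List α), _) (by simp), mul_one]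
      exact (hf.2 _ (IsSub.id _)).trans hε.le
    · refine av_le fun x => ?_
      rw [ind_of_not (by simp), mul_zero]
      exact hε.le
  | cons a l ih =>
    intro η _ ε hε
    obtain ⟨η', _, h₁⟩ := ih η (ε / 5) (by positivity)
    obtain ⟨ι, _, h₂⟩ := exists_partition h η' a (ε := ε / 5) (by positivity)
    refine ⟨ι, inferInstance, fun f hf D hD => ?_⟩
    have hsub : ∀ φ : (η' → Option α) → (ι → Option α), IsSub Set.univ φ →
        SubNonpos η (fun x => f (φ x)) := fun φ hφ =>
      ⟨fun x => hf.1 _, fun ψ hψ => hf.2 _ (hφ.comp hψ)⟩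
    have hih := fun (φ : (η' → Option α) → (ι → Option α)) (hφ : IsSub Set.univ φ) =>
      h₁ _ (hsub φ hφ) (fun a => φ ⁻¹' D a) fun a => (hD a).preimage hφ
    let C (x : ι → Option α) : Prop := ∀ b ∈ l, x ∈ D b
    have hP : ∀ x, (∀ b ∈ a :: l, x ∈ D b) ↔ x ∈ D a ∧ C x := fun x => by simp [C]
    have hf' : ∀ (p : (ι → Option α) → Prop) x, f x * ind (p x) ≤ 1 :=
      fun p x => mul_ind_le_one (hf.1 x) _
    -- the part inside `D a` and inside `C`
    have g1 := h₂ (D a) (hD a) (fun x => f x * ind (C x) - ε / 5)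
      ⟨fun x => by linarith [hf' C x], fun φ hφ => by
        rw [av_sub, av_const]; exact sub_nonpos.2 (hih φ hφ).1⟩
    -- the part inside `D a` and outside `C`
    have g2 := h₂ (D a) (hD a) (fun x => f x * ind (¬ C x) - ε / 5)
      ⟨fun x => by linarith [hf' (fun x => ¬ C x) x], fun φ hφ => by
        rw [av_sub, av_const]; exact sub_nonpos.2 (hih φ hφ).2⟩
    -- the part outside `D a`
    have g3 := h₂ (D a)ᶜ (hD a).compl (fun x => f x - 2 * (ε / 5))
      ⟨fun x => by linarith [hf.1 x], fun φ hφ => by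
        have e : av (fun x => f (φ x)) = av (fun x => f (φ x) * ind (C (φ x))) +
            av fun x => f (φ x) * ind (¬ C (φ x)) := by
          rw [← av_add]
          exact congrArg av (funext fun x => by rw [ind_not]; ring)
        have e1 : av (fun x => f (φ x) * ind (C (φ x))) ≤ ε / 5 := (hih φ hφ).1
        have e2 : av (fun x => f (φ x) * ind (¬ C (φ x))) ≤ ε / 5 := (hih φ hφ).2
        rw [av_sub, av_const]
        linarith⟩
    constructor
    · have : av (fun x => f x * ind (∀ b ∈ a :: l, x ∈ D b)) ≤
          av fun x => (f x * ind (C x) - ε / 5) * ind (x ∈ D a) + ε / 5 := by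
        refine av_mono fun x => ?_
        rw [ind_congr (hP x), ind_and]
        nlinarith [ind_le_one (x ∈ D a)]
      rw [av_add, av_const] at this
      linarith
    · have : av (fun x => f x * ind (¬ ∀ b ∈ a :: l, x ∈ D b)) ≤
          av fun x => ((f x * ind (¬ C x) - ε / 5) * ind (x ∈ D a) +
            (f x - 2 * (ε / 5)) * ind (x ∈ (D a)ᶜ)) + 3 * (ε / 5) := by
        refine av_mono fun x => ?_
        rw [ind_congr (not_congr (hP x)), ind_not, ind_and, ind_not (C x),
          show ind (x ∈ (D a)ᶜ) = 1 - ind (x ∈ D a) from ind_not _]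
        nlinarith [ind_le_one (x ∈ D a), ind_nonneg (x ∈ D a)]
      rw [av_add, av_const, av_add] at this
      linarith

end inter

/-! ### A Ramsey dichotomy for variable words -/

section ramsey
variable {α η ι κ : Type}

/-- If a subspace has a parameter in the index `Unit`, its constant coordinates `none` may be
replaced by that parameter. Nothing changes on the points where this parameter is `none`. -/
lemma IsSub.exists_absorb [Nonempty α] {φ : (Unit ⊕ η → Option α) → (ι → Option α)}
    (h : IsSub Set.univ φ) : ∃ φ' : (Unit ⊕ η → Option α) → (ι → Option α),
      IsSub (Set.range some) φ' ∧ ∀ x, x (.inl ()) = none → φ' x = φ x := by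
  classical
  refine ⟨fun x i => if ∀ y, φ y i = none then x (.inl ()) else φ x i, ⟨fun i => ?_, ?_⟩,
    fun x hx => funext fun i => ?_⟩
  · by_cases hi : ∀ y, φ y i = none
    · exact .inr ⟨.inl (), fun x => if_pos hi⟩
    · simp only [if_neg hi]
      rcases h.coord i with ⟨b, -, hb⟩ | he
      · rcases b with _ | b
        · exact (hi hb).elim
        · exact .inl ⟨some b, ⟨b, rfl⟩, hb⟩
      · exact .inr he
  · obtain ⟨s, hs, h1⟩ := h.proper
    refine ⟨s, hs, fun e x => ?_⟩
    have : ¬ ∀ y, φ y (s e) = none := fun hn => by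
      have := hn fun _ => some (Classical.arbitrary α)
      rw [h1] at this
      exact Option.some_ne_none _ this
    rw [if_neg this, h1]
  · by_cases hi : ∀ y, φ y i = none
    · simp only [if_pos hi, hx, hi x]
    · exact if_neg hi

/-- Either `G` contains a subspace of a large prescribed dimension, or there is a subspace of
dimension `n` without constant coordinates `none` on which no word with a letter `none` is in `G`.
A word with a letter `none` is to be thought of as a variable word over `α`. -/
lemma exists_ramsey [Finite α] [Nonempty α] (n : ℕ) : ∃ (ρ : Type) (_ : Finite ρ),
    Nat.card ρ = n ∧ ∀ (L : Type) [Finite L], ∃ (M : Type) (_ : Finite M),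
      ∀ G : Set (M → Option α),
        (∃ W : (L → Option α) → (M → Option α), IsSub Set.univ W ∧ ∀ x, W x ∈ G) ∨
        ∃ V : (ρ → Option α) → (M → Option α), IsSub (Set.range some) V ∧
          ∀ x, (∃ i, x i = none) → V x ∉ G := by
  induction n with
  | zero =>
    exact ⟨Empty, inferInstance, by simp, fun L _ => ⟨Empty, inferInstance, fun G => .inr
      ⟨fun _ e => e.elim, ⟨fun e => e.elim, fun e => e, fun e => e.elim, fun e => e.elim⟩,
        fun x ⟨i, _⟩ => i.elim⟩⟩⟩
  | succ n ih =>
    obtain ⟨ρ, _, hρ, ih⟩ := ih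
    refine ⟨Unit ⊕ ρ, inferInstance, by rw [Nat.card_sum, hρ, Nat.card_unique, add_comm],
      fun L _ => ?_⟩
    obtain ⟨L', _, hL'⟩ := exists_mono (Option α) α L
    obtain ⟨M', _, hM'⟩ := ih L'
    obtain ⟨M, _, hM⟩ := exists_mono (Option α) Prop (Unit ⊕ (M' ⊕ L))
    refine ⟨M, inferInstance, fun G => ?_⟩
    obtain ⟨W, hW, k, hk⟩ := hM fun x => x ∈ G
    let a₀ : α := Classical.arbitrary α
    by_cases hk' : k
    · refine .inl ⟨_, hW.comp (((IsSub.id Set.univ).elim_right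
        (v := fun _ : M' => some a₀) fun _ => trivial).elim_right
        (v := fun _ : Unit => none) fun _ => trivial), fun x => ?_⟩
      exact (hk _).mpr hk'
    · have hWG : ∀ x, W x ∉ G := fun x hx => hk' ((hk x).mp hx)
      obtain ⟨W', hW', hWW⟩ := hW.exists_absorb
      let Q (t : Unit → Option α) (m : M' → Option α) : M → Option α :=
        W' (Sum.elim t (Sum.elim m fun _ : L => some a₀))
      rcases hM' {m | ∃ a : α, Q (fun _ => some a) m ∈ G} with ⟨U, hU, hUG⟩ | ⟨V, hV, hVG⟩
      · -- Make the letter witnessing membership constant.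
        choose c hc using hUG
        obtain ⟨Y, hY, a, ha⟩ := hL' c
        refine .inl ⟨_, hW'.univ.comp (((hU.comp hY).elim_left
          (v := fun _ : L => some a₀) fun _ => trivial).elim_right
          (v := fun _ : Unit => some a) fun _ => trivial), fun x => ?_⟩
        rw [← ha x]
        exact hc _
      · refine .inr ⟨_, hW'.comp ((IsSub.id (η := Unit) (Set.range some)).prod (hV.elim_left
          (v := fun _ : L => some a₀) fun _ => ⟨_, rfl⟩)), fun z hz => ?_⟩
        rcases hz0 : z (.inl ()) with _ | a
        · rw [hWW]
          · exact hWG _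
          · exact hz0
        · obtain ⟨i | i, hi⟩ := hz
          · rw [hz0] at hi
            exact (Option.some_ne_none _ hi).elim
          · intro hmem
            refine hVG (z ∘ Sum.inr) ⟨i, hi⟩ ⟨a, ?_⟩
            have : z ∘ Sum.inl = fun _ : Unit => some a := funext fun _ => hz0
            rwa [this] at hmem

end ramsey

/-! ### From the alphabet `α` to `Option α` -/

section main
variable {α η ι κ L M ρ : Type}

/-- A word with a letter `none` is the variable word of a line over `Option α`, whose points are
the word itself and the words where `none` is replaced by a letter of `α`. -/
lemma exists_line_of_none {w : M → Option α} (hw : ∃ i, w i = none) :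
    ∃ ψ : (Unit → Option α) → (M → Option α), IsSub Set.univ ψ ∧
      ∀ t, ψ t = w ∨ ∃ a, ψ t = rep a w := by
  classical
  refine ⟨fun t i => if w i = none then t () else w i, ⟨fun i => ?_, ?_⟩, fun t => ?_⟩
  · by_cases hi : w i = none
    · exact .inr ⟨(), fun t => if_pos hi⟩
    · exact .inl ⟨w i, trivial, fun t => if_neg hi⟩
  · obtain ⟨i, hi⟩ := hw
    exact ⟨fun _ => i, injective_of_subsingleton _, fun _ t => if_pos hi⟩
  · rcases ht : t () with _ | a
    · left
      funext i
      by_cases hi : w i = none <;> simp [hi, ht]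
    · right
      refine ⟨a, funext fun i => ?_⟩
      rcases hi : w i with _ | b <;> simp [rep, hi, ht]

/-- If all sections `{v | (w, v) ∈ A}` have density at least `d / 2`, then every subspace of large
dimension contains a word `w` with a letter `none` such that the points of the line over `α` with
variable word `w` all lie in `A`, for a positive proportion of the continuations `v`. -/
lemma exists_good_word [Finite α] [Nonempty α] [Finite ρ] [Finite M] [Finite κ] {d : ℝ}
    (hd : 0 < d) (h : HasSub α Unit ρ (d / 4)) (A : Set (M ⊕ κ → Option α))
    (hA : ∀ w, d / 2 ≤ av fun v => ind (Sum.elim w v ∈ A))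
    {V : (ρ → Option α) → (M → Option α)} (hV : IsSub (Set.range some) V) :
    ∃ z : ρ → Option α, (∃ i, z i = none) ∧ d / 4 / Nat.card ((Unit → α) → (ρ → α)) ≤
      av fun v => ind (∀ a, Sum.elim (rep a (V z)) v ∈ A) := by
  obtain ⟨φ, hφ, hm⟩ := h.common (by positivity)
    (fun v : κ → Option α => {z : ρ → α | Sum.elim (V fun i => some (z i)) v ∈ A}) (by
      unfold dens
      rw [av_comm]
      refine le_av fun z => le_trans (by linarith) (hA _))
  obtain ⟨φ', hφ', he⟩ := hφ.exists_lift
  obtain ⟨s, -, hs⟩ := hφ'.proper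
  refine ⟨φ' fun _ => none, ⟨s (), by rw [hs]⟩, hm.trans (av_mono fun v => ind_mono ?_)⟩
  intro hx a
  rw [rep_apply hV, rep_apply hφ']
  have : rep a (fun _ : Unit => (none : Option α)) = fun e => some ((fun _ => a) e) := rfl
  rw [this, he]
  exact hx _

/-- Let `A` contain no line, and consider a subspace all of whose words `w` are as in
`exists_good_word`. If the line over `α` with variable word `w` is in the section of `A` over `v`,
then `w` itself is not. The set of such `w` is an intersection of insensitive sets, so by
`exists_partition_inter` the density of `A` on its complement is hardly above `d + γ`. Since the
complement misses a proportion `θ` of the pairs `(w, v)`, this bounds the density of `A`. -/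
lemma density_le_of_good [Finite α] [Nonempty α] [Finite η] [Finite L] [Finite M] [Finite κ]
    {d γ θ : ℝ} (hd : 0 ≤ d) (hγ : 0 ≤ γ) (hη : HasSub (Option α) Unit η (d + γ))
    {l : List α} (hl : ∀ a, a ∈ l)
    (hL : ∀ f : (L → Option α) → ℝ, SubNonpos η f →
      ∀ D : α → Set (L → Option α), (∀ a, Insens a (D a)) →
      av (fun x => f x * ind (¬ ∀ a ∈ l, x ∈ D a)) ≤ γ)
    (A : Set (M ⊕ κ → Option α))
    (hfree : ∀ φ : (Unit → Option α) → (M ⊕ κ → Option α), IsSub Set.univ φ → ¬ ∀ x, φ x ∈ A)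
    (hA : ∀ w, d - γ ≤ av fun v => ind (Sum.elim w v ∈ A))
    {W : (L → Option α) → (M → Option α)} (hW : IsSub Set.univ W)
    (hnone : ∀ x, ∃ i, W x i = none)
    (hgood : ∀ x, θ ≤ av fun v => ind (∀ a, Sum.elim (rep a (W x)) v ∈ A)) :
    d - γ - (d + γ) * (1 - θ) ≤ γ := by
  have h1 : ∀ v : κ → Option α, av (fun x => ind (Sum.elim (W x) v ∈ A) -
      (d + γ) * (1 - ind (∀ a, Sum.elim (rep a (W x)) v ∈ A))) ≤ γ := by
    intro v
    refine le_trans (le_of_eq ?_) (hL (fun x => ind (Sum.elim (W x) v ∈ A) - (d + γ))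
      ⟨fun x => ?_, fun φ hφ => ?_⟩ (fun a => {x | Sum.elim (rep a (W x)) v ∈ A}) fun a x => ?_)
    · refine congrArg av (funext fun x => ?_)
      have e : (∀ a ∈ l, x ∈ {x | Sum.elim (rep a (W x)) v ∈ A}) ↔
          ∀ a, Sum.elim (rep a (W x)) v ∈ A := ⟨fun h a => h a (hl a), fun h a _ => h a⟩
      rw [ind_congr (not_congr e), ind_not]
      by_cases hx : ∀ a, Sum.elim (rep a (W x)) v ∈ A
      · have hn : Sum.elim (W x) v ∉ A := by
          intro hmem
          obtain ⟨ψ, hψ, hψ'⟩ := exists_line_of_none (hnone x)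
          refine hfree _ (hψ.elim_left (v := v) fun _ => trivial) fun t => ?_
          rcases hψ' t with ht | ⟨a, ht⟩
          · rwa [ht]
          · rw [ht]; exact hx a
        rw [ind_of_not hn, ind_of hx]
        ring
      · rw [ind_of_not hx]
        ring
    · linarith [ind_le_one (Sum.elim (W x) v ∈ A)]
    · rw [av_sub, av_const, sub_nonpos]
      by_contra! hc
      obtain ⟨ψ, hψ, hm⟩ := hη {x | Sum.elim (W (φ x)) v ∈ A} hc.le
      exact hfree _ (((hW.comp hφ).comp hψ).elim_left (v := v) fun _ => trivial) hm
    · change Sum.elim (rep a (W x)) v ∈ A ↔ Sum.elim (rep a (W (rep a x))) v ∈ A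
      rw [rep_apply_rep hW]
  have h2 := av_le h1
  rw [av_comm] at h2
  refine le_trans (le_av fun x => ?_) h2
  rw [av_sub, av_mul_left, av_sub, av_const]
  have := mul_le_mul_of_nonneg_left (hgood x) (add_nonneg hd hγ)
  linarith [hA (W x)]

lemma DHJ.mono [Finite α] {δ δ' : ℝ} (h : DHJ α δ) (hδ : δ ≤ δ') : DHJ α δ' := by
  obtain ⟨ι, hι, hs⟩ := h
  exact ⟨ι, hι, fun A hA => hs A (hδ.trans hA)⟩

/-- The density Hales-Jewett theorem passes from `α` to `Option α`. Otherwise, there is a positive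
critical density `d`. A set without lines whose density is almost `d` has density almost `d` in all
sections over a bounded number of coordinates, since no section is denser than `d` plus a small
constant. The dichotomy `exists_ramsey` for the words `w` as in `exists_good_word` then leads to the
situation excluded by `density_le_of_good`. -/
lemma dhj_option [Finite α] [Nonempty α] (h : ∀ δ > 0, DHJ α δ) :
    ∀ δ > 0, DHJ (Option α) δ := by
  classical
  by_contra! hcon
  obtain ⟨δ₀, hδ₀, hnot⟩ := hcon
  let S : Set ℝ := {δ | DHJ (Option α) δ}
  have hlb : ∀ δ ∈ S, δ₀ ≤ δ := fun δ hδ => by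
    by_contra! hlt
    exact hnot (DHJ.mono hδ hlt.le)
  have h2 : (2 : ℝ) ∈ S := ⟨Empty, inferInstance, fun A hA => by linarith [dens_le_one A]⟩
  set d : ℝ := sInf S with hd
  have hd0 : 0 < d := hδ₀.trans_le (le_csInf ⟨2, h2⟩ hlb)
  have hd2 : d ≤ 2 := csInf_le ⟨δ₀, hlb⟩ h2
  have hup : ∀ γ > 0, DHJ (Option α) (d + γ) := fun γ hγ => by
    obtain ⟨δ, hδ, hlt⟩ := exists_lt_of_csInf_lt ⟨2, h2⟩ (show sInf S < d + γ by linarith)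
    exact DHJ.mono hδ hlt.le
  have hlow : ∀ δ < d, ¬ DHJ (Option α) δ := fun δ hlt hδ =>
    absurd (csInf_le ⟨δ₀, hlb⟩ (show δ ∈ S from hδ)) (not_le.2 hlt)
  obtain ⟨ι, _, hι⟩ := h (d / 4) (by positivity)
  obtain ⟨ρ, _, hρ, hram⟩ := exists_ramsey (α := α) (Nat.card ι)
  have hρ' : HasSub α Unit ρ (d / 4) := hι.of_card_le hρ.ge
  set θ : ℝ := d / 4 / Nat.card ((Unit → α) → (ρ → α)) with hθ
  have hK : (1 : ℝ) ≤ Nat.card ((Unit → α) → (ρ → α)) := by exact_mod_cast Nat.card_pos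
  have hθ0 : 0 < θ := by positivity
  have hθ1 : θ ≤ 1 := by
    rw [hθ, div_le_iff₀ (by linarith)]; linarith
  set γ : ℝ := d * θ / 4 with hγ
  have hγ0 : 0 < γ := by positivity
  have hγd : γ ≤ d / 2 := by
    have := mul_le_of_le_one_right hd0.le hθ1
    linarith
  obtain ⟨η, _, hη⟩ := hup γ hγ0
  let _ := Fintype.ofFinite α
  obtain ⟨L, _, hL⟩ := exists_partition_inter h (univ : Finset α).toList η γ hγ0
  obtain ⟨M, _, hM⟩ := hram L
  set N : ℝ := (Nat.card (M → Option α) : ℝ) with hN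
  have hN1 : 1 ≤ N := by rw [hN]; exact_mod_cast Nat.card_pos
  set σ : ℝ := γ / (2 * N) with hσ
  have hσ0 : 0 < σ := by positivity
  obtain ⟨κ, _, hκ⟩ := hup σ hσ0
  obtain ⟨A, hA, hfree⟩ : ∃ A : Set (M ⊕ κ → Option α), d - σ ≤ dens A ∧
      ∀ φ : (Unit → Option α) → (M ⊕ κ → Option α), IsSub Set.univ φ → ¬ ∀ x, φ x ∈ A := by
    by_contra! hc
    exact hlow (d - σ) (by linarith) ⟨M ⊕ κ, inferInstance, hc⟩
  have hsec1 : ∀ w, (av fun v => ind (Sum.elim w v ∈ A)) ≤ d + σ := by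
    intro w
    by_contra! hc
    obtain ⟨φ, hφ, hm⟩ := hκ {v | Sum.elim w v ∈ A} hc.le
    exact hfree _ (hφ.elim_right (v := w) fun _ => trivial) hm
  have hsec2 : ∀ w, d - γ ≤ av fun v => ind (Sum.elim w v ∈ A) := by
    intro w
    have h3 := le_card_mul_av
      (f := fun w => d + σ - av fun v => ind (Sum.elim w v ∈ A))
      (fun w => sub_nonneg.2 (hsec1 w)) w
    rw [av_sub, av_const, ← av_words (fun x => ind (x ∈ A))] at h3
    have h4 : N * (d + σ - dens A) ≤ N * (2 * σ) :=
      mul_le_mul_of_nonneg_left (by linarith) (by linarith)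
    have h5 : N * (2 * σ) = γ := by rw [hσ]; field_simp
    have h6 : d + σ - (av fun v => ind (Sum.elim w v ∈ A)) ≤ N * (d + σ - dens A) := h3
    linarith
  rcases hM {w | (∃ i, w i = none) ∧
      θ ≤ av fun v => ind (∀ a, Sum.elim (rep a w) v ∈ A)} with ⟨W, hW, hWG⟩ | ⟨V, hV, hVG⟩
  · have := density_le_of_good hd0.le hγ0.le hη (l := (univ : Finset α).toList) (by simp)
      (fun f hf D hD => (hL f hf D hD).2) A hfree hsec2 hW (fun x => (hWG x).1)
      fun x => (hWG x).2
    nlinarith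
  · obtain ⟨z, ⟨i, hi⟩, hz⟩ := exists_good_word hd0 hρ' A
      (fun w => le_trans (by linarith) (hsec2 w)) hV
    obtain ⟨s, -, hs⟩ := hV.proper
    exact hVG z ⟨i, hi⟩ ⟨⟨s i, by rw [hs, hi]⟩, hz⟩

/-- The density Hales-Jewett theorem, for an alphabet of each size. -/
lemma exists_dhj (k : ℕ) : ∃ (α : Type) (_ : Finite α), Nonempty α ∧ Nat.card α = k + 1 ∧
    ∀ δ > 0, DHJ α δ := by
  induction k with
  | zero =>
    refine ⟨Unit, inferInstance, inferInstance, by simp, fun δ hδ => ⟨Unit, inferInstance,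
      fun A hA => ⟨_, IsSub.id _, fun x => ?_⟩⟩⟩
    obtain ⟨y, hy⟩ := exists_le_of_le_av hA
    rw [Subsingleton.elim x y]
    by_contra hn
    rw [ind_of_not hn] at hy
    linarith
  | succ k ih =>
    obtain ⟨α, _, _, hc, h⟩ := ih
    exact ⟨Option α, inferInstance, inferInstance, by rw [Finite.card_option, hc], dhj_option h⟩

end main

/-! ### Arithmetic progressions -/

lemma ncard_le_sum_add (A : Set ℕ) (n s : ℕ) :
    ((A ∩ Set.Icc 1 n).ncard : ℝ) ≤ (∑ b ∈ range (n + 1), ind (b + s ∈ A)) + s := by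
  classical
  have h1 : ((A ∩ Set.Icc 1 n).ncard : ℝ) ≤ ∑ b ∈ range (n + 1), ind (b ∈ A) := by
    have e1 : A ∩ Set.Icc 1 n ⊆ ((range (n + 1)).filter (· ∈ A) : Finset ℕ) := by
      rintro x ⟨hx, -, hn⟩
      simpa [hx] using Nat.lt_succ_of_le hn
    have e2 := Set.ncard_le_ncard e1 (Finset.finite_toSet _)
    rw [Set.ncard_coe_finset] at e2
    refine le_trans (Nat.cast_le.2 e2) (le_of_eq ?_)
    rw [Finset.card_filter, Nat.cast_sum]
    refine Finset.sum_congr rfl fun x _ => ?_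
    by_cases hx : x ∈ A <;> simp [ind, hx]
  have h2 : ∑ b ∈ range (n + 1), ind (b ∈ A) ≤ ∑ b ∈ range (s + (n + 1)), ind (b ∈ A) :=
    Finset.sum_le_sum_of_subset_of_nonneg (by intro x; simp; omega) fun _ _ _ => ind_nonneg _
  rw [Finset.sum_range_add _ s (n + 1)] at h2
  have h3 : ∑ b ∈ range s, ind (b ∈ A) ≤ s := by
    refine (Finset.sum_le_sum fun b _ => ind_le_one (b ∈ A)).trans ?_
    simp
  have h4 : ∑ b ∈ range (n + 1), ind (s + b ∈ A) = ∑ b ∈ range (n + 1), ind (b + s ∈ A) := by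
    simp only [add_comm s]
  linarith

/-- A combinatorial line is mapped to an arithmetic progression when the letters of a word are
replaced by `0, …, k` and added up. -/
lemma exists_ap_of_dense {α : Type} [Finite α] {k : ℕ} (hk : Nat.card α = k + 1)
    (h : ∀ δ > 0, DHJ α δ) (A : Set ℕ) {c : ℝ} (hc : 0 < c)
    (hA : ∀ n₀ : ℕ, ∃ n ≥ n₀, c * n ≤ (A ∩ Set.Icc 1 n).ncard) :
    ∃ a d : ℕ, 0 < d ∧ ∀ i < k + 1, a + i * d ∈ A := by
  classical
  obtain ⟨e⟩ : Nonempty (α ≃ Fin (k + 1)) := ⟨Finite.equivFinOfCardEq hk⟩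
  have : Nonempty α := ⟨e.symm 0⟩
  obtain ⟨ι, _, hι⟩ := h (c / 2) (by positivity)
  let _ := Fintype.ofFinite ι
  let Φ (x : ι → α) : ℕ := ∑ i, (e (x i) : ℕ)
  set L : ℕ := Fintype.card ι * k with hL
  have hΦ : ∀ x, Φ x ≤ L := fun x => by
    refine (Finset.sum_le_card_nsmul univ _ k fun i _ => Nat.lt_succ_iff.1 (e (x i)).2).trans ?_
    simp [hL]
  obtain ⟨n₀, hn₀⟩ := exists_nat_ge ((2 * L + c) / c)
  obtain ⟨n, hn, hcn⟩ := hA n₀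
  have hn' : 2 * L + c ≤ n * c := by
    rw [div_le_iff₀ hc] at hn₀
    exact hn₀.trans (mul_le_mul_of_nonneg_right (by exact_mod_cast hn) hc.le)
  have hdens : c / 2 ≤ av fun b : Fin (n + 1) => dens {x : ι → α | b + Φ x ∈ A} := by
    unfold dens
    rw [av_comm]
    refine le_av fun x => ?_
    have h1 := ncard_le_sum_add A n (Φ x)
    have h2 : (Φ x : ℝ) ≤ L := by exact_mod_cast hΦ x
    rw [av_eq_sum_div, Nat.card_fin, le_div_iff₀ (by positivity)]
    simp only [Set.mem_ofPred_eq]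
    rw [Fin.sum_univ_eq_sum_range (fun b => ind (b + Φ x ∈ A))]
    push_cast
    linarith
  obtain ⟨b, hb⟩ := exists_le_of_le_av hdens
  obtain ⟨φ, hφ, hm⟩ := hι _ hb
  let J : Finset ι := univ.filter fun i => ∀ x, φ x i = x ()
  let x₀ : Unit → α := fun _ => e.symm 0
  have hsum : ∀ a, Φ (φ fun _ => a) =
      (∑ i ∈ univ.filter (fun i => ¬ ∀ x, φ x i = x ()), (e (φ x₀ i) : ℕ)) + e a * J.card := by
    intro a
    change (∑ i, (e (φ (fun _ => a) i) : ℕ)) = _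
    refine Eq.trans ?_ (add_comm _ _)
    rw [← Finset.sum_filter_add_sum_filter_not univ (fun i => ∀ x, φ x i = x ())]
    congr 1
    · rw [mul_comm, ← smul_eq_mul, ← Finset.sum_const]
      refine Finset.sum_congr rfl fun i hi => ?_
      rw [(Finset.mem_filter.1 hi).2]
    · refine Finset.sum_congr rfl fun i hi => ?_
      rcases hφ.coord i with ⟨a', -, ha'⟩ | ⟨_, he⟩
      · rw [ha', ha']
      · exact ((Finset.mem_filter.1 hi).2 he).elim
  obtain ⟨s, -, hs⟩ := hφ.proper
  refine ⟨b + ∑ i ∈ univ.filter (fun i => ¬ ∀ x, φ x i = x ()), (e (φ x₀ i) : ℕ), J.card,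
    Finset.card_pos.2 ⟨s (), Finset.mem_filter.2 ⟨mem_univ _, hs ()⟩⟩, fun i hi => ?_⟩
  have : b + Φ (φ fun _ => e.symm ⟨i, hi⟩) ∈ A := hm _
  rw [hsum, e.apply_symm_apply, ← add_assoc] at this
  exact this

end DensityHJ

/-- Szemerédi's theorem. -/
theorem szemeredi (A : Set ℕ)
    (hpos : 0 < Filter.limsup
      (fun n : ℕ => ((A ∩ Set.Icc 1 n).ncard : ℝ) / n) Filter.atTop) :
    ∀ k : ℕ, ∃ a d : ℕ, 0 < d ∧ ∀ i < k, a + i * d ∈ A := by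
  intro k
  obtain ⟨α, _, _, hk, h⟩ := DensityHJ.exists_dhj k
  obtain ⟨c, hc, hlt⟩ := exists_between hpos
  have hco : Filter.IsCoboundedUnder (· ≤ ·) Filter.atTop
      (fun n : ℕ => ((A ∩ Set.Icc 1 n).ncard : ℝ) / n) :=
    Filter.isCoboundedUnder_le_of_le _ (x := 0) fun n => by positivity
  have hf := Filter.frequently_lt_of_lt_limsup hco hlt
  obtain ⟨a, d, hd, hm⟩ := DensityHJ.exists_ap_of_dense hk h A hc fun n₀ => by
    obtain ⟨n, hn, hcn⟩ := Filter.frequently_atTop.1 hf (n₀ + 1)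
    have : (0 : ℝ) < n := by exact_mod_cast (show 0 < n by omega)
    exact ⟨n, by omega, ((lt_div_iff₀ this).1 hcn).le⟩
  exact ⟨a, d, hd, fun i hi => hm i (by omega)⟩
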